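/- Suppose F : R → C is smooth and supported in a compact interval [a,b], and h : [a,b] → R is smooth with |h'(t)| ≥ R > 0 on [a,b] and |h^{(j)}(t)| ≤ C_j·Y·Q^{−j} for all j ≥ 2, where Y ≥ 1, Q > 0. If moreover |F^{(j)}(t)| ≤ C'_j·X·U^{−j} for all j ≥ 0 with X, U > 0, then for every A ≥ 0 there is a constant depending only on A and the C_j such that |∫ F(t)·e(h(t)) dt| ≤ C(A)·(b−a)·X·( (Q·R/√Y)^{−A} + (R·U)^{−A} ), where e(x) = e^{2πi x}. -/

import Mathlib

open Real

/-!
Integrating by parts against `e(h)` replaces the amplitude `F` by `-(2πi)⁻¹ (F / h')'`. Put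
`W = min U (Q / √Y)`. On the scale `W` each derivative of `F` costs a factor `W⁻¹`, and when
`R W ≥ 1` so does each derivative of `1 / h'`, because `Y Q⁻ʲ ≤ W⁻ʲ` for `j ≥ 2`. Hence one
integration by parts gains a factor `(R W)⁻¹`, and `⌈A⌉` of them suffice. When `R W ≤ 1` the
trivial bound on the integral is already good enough.
-/

open Filter Topology MeasureTheory

section DerivBound

variable {𝕜 E : Type*} [NontriviallyNormedField 𝕜] [NormedAddCommGroup E] [NormedSpace 𝕜 E]

theorem iteratedDeriv_smul_eq_sum {n : ℕ} {φ : 𝕜 → 𝕜} {f : 𝕜 → E} {t : 𝕜}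
    (hφ : ContDiffAt 𝕜 n φ t) (hf : ContDiffAt 𝕜 n f t) :
    iteratedDeriv n (fun x => φ x • f x) t = ∑ i ∈ Finset.range (n + 1),
      n.choose i • iteratedDeriv i φ t • iteratedDeriv (n - i) f t := by
  simpa only [iteratedDerivWithin_univ] using! iteratedDerivWithin_smul (Set.mem_univ t)
    uniqueDiffOn_univ hφ.contDiffWithinAt hf.contDiffWithinAt

/-- `f` has size at most `X` and varies on the scale `W` at the point `t`, as far as its first `n`
derivatives can tell: each differentiation costs at most a factor `W⁻¹`. Implied constants are
absorbed into `X`. -/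
structure HasDerivBoundAt (n : ℕ) (X W : ℝ) (f : 𝕜 → E) (t : 𝕜) : Prop where
  contDiffAt : ContDiffAt 𝕜 n f t
  norm_iteratedDeriv_le : ∀ j ≤ n, ‖iteratedDeriv j f t‖ ≤ X / W ^ j

namespace HasDerivBoundAt

variable {n : ℕ} {X Y W : ℝ} {f : 𝕜 → E} {φ : 𝕜 → 𝕜} {t : 𝕜}

theorem norm_le (hf : HasDerivBoundAt n X W f t) : ‖f t‖ ≤ X := by
  simpa using hf.norm_iteratedDeriv_le 0 (Nat.zero_le n)

theorem of_le {m : ℕ} (hf : HasDerivBoundAt n X W f t) (hmn : m ≤ n) :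
    HasDerivBoundAt m X W f t where
  contDiffAt := hf.contDiffAt.of_le (mod_cast hmn)
  norm_iteratedDeriv_le j hj := hf.norm_iteratedDeriv_le j (hj.trans hmn)

theorem mono (hf : HasDerivBoundAt n X W f t) (hW : 0 < W) (hXY : X ≤ Y) :
    HasDerivBoundAt n Y W f t where
  contDiffAt := hf.contDiffAt
  norm_iteratedDeriv_le j hj := (hf.norm_iteratedDeriv_le j hj).trans (by gcongr)

theorem congr_of_eventuallyEq {g : 𝕜 → E} (hf : HasDerivBoundAt n X W f t) (hgf : g =ᶠ[𝓝 t] f) :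
    HasDerivBoundAt n X W g t where
  contDiffAt := hf.contDiffAt.congr_of_eventuallyEq hgf
  norm_iteratedDeriv_le j hj := by
    rw [hgf.iteratedDeriv_eq j]
    exact hf.norm_iteratedDeriv_le j hj

theorem neg (hf : HasDerivBoundAt n X W f t) : HasDerivBoundAt n X W (fun x => -f x) t where
  contDiffAt := hf.contDiffAt.neg
  norm_iteratedDeriv_le j hj := by simpa using hf.norm_iteratedDeriv_le j hj

protected theorem deriv (hf : HasDerivBoundAt (n + 1) X W f t) :
    HasDerivBoundAt n (X / W) W (deriv f) t where
  contDiffAt := hf.contDiffAt.derivWithin (by simp)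
  norm_iteratedDeriv_le j hj := by
    rw [← iteratedDeriv_succ', div_div, ← pow_succ']
    exact hf.norm_iteratedDeriv_le (j + 1) (by lia)

theorem of_deriv (hf : ContDiffAt 𝕜 (n + 1) f t) (hft : ‖f t‖ ≤ X)
    (hf' : HasDerivBoundAt n (X / W) W (deriv f) t) : HasDerivBoundAt (n + 1) X W f t where
  contDiffAt := mod_cast hf
  norm_iteratedDeriv_le
    | 0, _ => by simpa using hft
    | j + 1, hj => by
      rw [iteratedDeriv_succ', pow_succ', ← div_div]
      exact hf'.norm_iteratedDeriv_le j (by lia)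

theorem smul (hφ : HasDerivBoundAt n X W φ t) (hf : HasDerivBoundAt n Y W f t) (hW : 0 < W) :
    HasDerivBoundAt n (2 ^ n * (X * Y)) W (fun x => φ x • f x) t where
  contDiffAt := hφ.contDiffAt.smul hf.contDiffAt
  norm_iteratedDeriv_le j hj := by
    have hX : 0 ≤ X := (norm_nonneg _).trans hφ.norm_le
    have hY : 0 ≤ Y := (norm_nonneg _).trans hf.norm_le
    have term_le (i : ℕ) (hi : i ∈ Finset.range (j + 1)) :
        ‖j.choose i • iteratedDeriv i φ t • iteratedDeriv (j - i) f t‖ ≤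
          j.choose i * (X * Y / W ^ j) := by
      have hij : i ≤ j := Finset.mem_range_succ_iff.1 hi
      calc _ ≤ j.choose i * (‖iteratedDeriv i φ t‖ * ‖iteratedDeriv (j - i) f t‖) := by
            rw [← norm_smul]
            exact norm_nsmul_le
        _ ≤ j.choose i * (X / W ^ i * (Y / W ^ (j - i))) := by
            gcongr
            · exact hφ.norm_iteratedDeriv_le i (hij.trans hj)
            · exact hf.norm_iteratedDeriv_le (j - i) (by lia)
        _ = j.choose i * (X * Y / W ^ j) := by
            rw [div_mul_div_comm, ← pow_add, Nat.add_sub_cancel' hij]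
    calc _ ≤ ∑ i ∈ Finset.range (j + 1), j.choose i * (X * Y / W ^ j) := by
          rw [iteratedDeriv_smul_eq_sum (hφ.of_le hj).contDiffAt (hf.of_le hj).contDiffAt]
          exact norm_sum_le_of_le _ term_le
      _ = 2 ^ j * (X * Y / W ^ j) := by
          rw [← Finset.sum_mul]
          exact_mod_cast congrArg (fun k : ℕ => (k : ℝ) * (X * Y / W ^ j)) (Nat.sum_range_choose j)
      _ ≤ 2 ^ n * (X * Y / W ^ j) := by
          gcongr
          norm_num
      _ = 2 ^ n * (X * Y) / W ^ j := by ring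

end HasDerivBoundAt

/-- The constant in the bound for the first `n` derivatives of `1 / φ` when those of `φ` are
bounded with constant `D`; the recursion mirrors `(1 / φ)' = -φ' (1 / φ)²`. -/
def invDerivConst (D : ℝ) : ℕ → ℝ
  | 0 => 1
  | n + 1 => 1 + 4 ^ n * D * invDerivConst D n ^ 2

theorem one_le_invDerivConst {D : ℝ} (hD : 0 ≤ D) : ∀ n, 1 ≤ invDerivConst D n
  | 0 => le_rfl
  | n + 1 => le_add_of_nonneg_right (by positivity)

theorem deriv_inv_eventuallyEq {φ : 𝕜 → 𝕜} {t : 𝕜} (hφ : ContDiffAt 𝕜 1 φ t) (hφt : φ t ≠ 0) :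
    deriv (fun x => (φ x)⁻¹) =ᶠ[𝓝 t] fun x => -(deriv φ x • (φ x)⁻¹ • (φ x)⁻¹) := by
  filter_upwards [hφ.eventually (by simp), hφ.continuousAt.eventually_ne hφt] with x hx hx0
  rw [(hx.differentiableAt_one.hasDerivAt.fun_inv hx0).deriv]
  simp only [smul_eq_mul]
  field_simp

theorem HasDerivBoundAt.inv {n : ℕ} {D R W : ℝ} {φ : 𝕜 → 𝕜} {t : 𝕜} (hD : 0 ≤ D) (hR : 0 < R)
    (hW : 0 < W) (hφ : ContDiffAt 𝕜 n φ t) (hRφ : R ≤ ‖φ t‖)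
    (hφ' : ∀ j, 1 ≤ j → j ≤ n → ‖iteratedDeriv j φ t‖ ≤ D * R / W ^ j) :
    HasDerivBoundAt n (invDerivConst D n / R) W (fun x => (φ x)⁻¹) t := by
  have hφt : φ t ≠ 0 := norm_pos_iff.1 (hR.trans_le hRφ)
  have norm_inv_le (n : ℕ) : ‖(φ t)⁻¹‖ ≤ invDerivConst D n / R := by
    rw [norm_inv, ← one_div]
    have := one_le_invDerivConst hD n
    gcongr
  induction n with
  | zero =>
    exact ⟨hφ.inv hφt, fun j hj => by simpa [Nat.le_zero.1 hj] using norm_inv_le 0⟩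
  | succ n ih =>
    have hinv := ih (hφ.of_le (mod_cast n.le_succ)) fun j hj hjn => hφ' j hj (by lia)
    have hderiv : HasDerivBoundAt n (D * R / W) W (deriv φ) t := by
      refine ⟨hφ.derivWithin (by simp), fun j hj => ?_⟩
      rw [← iteratedDeriv_succ', div_div, ← pow_succ']
      exact hφ' (j + 1) (by lia) (by lia)
    refine .of_deriv (mod_cast hφ.inv hφt) (norm_inv_le _) ?_
    refine (((hderiv.smul (hinv.smul hinv hW) hW).neg).congr_of_eventuallyEq
      (deriv_inv_eventuallyEq (hφ.of_le (by simp)) hφt)).mono hW ?_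
    calc 2 ^ n * (D * R / W * (2 ^ n * (invDerivConst D n / R * (invDerivConst D n / R))))
        = 4 ^ n * D * invDerivConst D n ^ 2 / R / W := by
          rw [show (4 : ℝ) = 2 * 2 by norm_num, mul_pow]
          field_simp
      _ ≤ invDerivConst D (n + 1) / R / W := by
          gcongr
          exact le_add_of_nonneg_left zero_le_one

end DerivBound

section OscillatoryIntegral

variable {E : Type*} [NormedAddCommGroup E] {S : Set ℝ} {F : ℝ → E} {h : ℝ → ℝ}

theorem eventuallyEq_zero_of_notMem_of_isClosed {α β : Type*} [TopologicalSpace α] [Zero β]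
    {S : Set α} {f : α → β} {t : α} (hS : IsClosed S) (hf : ∀ x ∉ S, f x = 0) (ht : t ∉ S) :
    f =ᶠ[𝓝 t] 0 :=
  (hS.isOpen_compl.eventually_mem ht).mono hf

theorem deriv_eq_zero_of_notMem_of_isClosed [NormedSpace ℝ E] (hS : IsClosed S)
    (hF : ∀ t ∉ S, F t = 0) : ∀ t ∉ S, deriv F t = 0 := fun t ht => by
  rw [(eventuallyEq_zero_of_notMem_of_isClosed hS hF ht).deriv_eq]
  exact deriv_const t 0

theorem integrable_of_continuousAt_of_eq_zero (hS : IsCompact S)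
    (hF : ∀ t ∈ S, ContinuousAt F t) (hF0 : ∀ t ∉ S, F t = 0) : Integrable F := by
  refine Continuous.integrable_of_hasCompactSupport ?_ (HasCompactSupport.intro hS hF0)
  refine continuous_iff_continuousAt.2 fun t => ?_
  by_cases ht : t ∈ S
  · exact hF t ht
  · exact continuousAt_const.congr
      (eventuallyEq_zero_of_notMem_of_isClosed hS.isClosed hF0 ht).symm

theorem norm_exp_two_pi_I_mul (x : ℝ) : ‖Complex.exp (2 * π * Complex.I * x)‖ = 1 := by
  rw [← Complex.norm_exp_ofReal_mul_I (2 * π * x)]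
  push_cast
  ring_nf

theorem hasDerivAt_exp_two_pi_I_mul {h' t : ℝ} (hh : HasDerivAt h h' t) :
    HasDerivAt (fun x : ℝ => Complex.exp (2 * π * Complex.I * h x))
      (Complex.exp (2 * π * Complex.I * h t) * (2 * π * Complex.I * h')) t :=
  (hh.ofReal_comp.const_mul (2 * π * Complex.I)).cexp

variable [NormedSpace ℂ E]

theorem norm_integral_exp_smul_le {X : ℝ} (hS : IsCompact S) (hF : ∀ t ∈ S, ‖F t‖ ≤ X)
    (hF0 : ∀ t ∉ S, F t = 0) :
    ‖∫ t : ℝ, Complex.exp (2 * π * Complex.I * h t) • F t‖ ≤ X * volume.real S := by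
  rw [← setIntegral_eq_integral_of_forall_compl_eq_zero fun t ht => by rw [hF0 t ht, smul_zero]]
  refine norm_setIntegral_le_of_norm_le_const hS.measure_lt_top fun t ht => ?_
  rw [norm_smul, norm_exp_two_pi_I_mul, one_mul]
  exact hF t ht

theorem integrable_exp_smul (hS : IsCompact S) (hh : ∀ t ∈ S, ContinuousAt h t)
    (hF : ∀ t ∈ S, ContinuousAt F t) (hF0 : ∀ t ∉ S, F t = 0) :
    Integrable fun t : ℝ => Complex.exp (2 * π * Complex.I * h t) • F t := by
  refine integrable_of_continuousAt_of_eq_zero hS (fun t ht => ?_)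
    fun t ht => by rw [hF0 t ht, smul_zero]
  have := hh t ht
  have := hF t ht
  fun_prop

theorem contDiffAt_inv_deriv_smul {t : ℝ} (hF : ContDiffAt ℝ 1 F t) (hh : ContDiffAt ℝ 2 h t)
    (hh0 : deriv h t ≠ 0) : ContDiffAt ℝ 1 (fun x => (deriv h x)⁻¹ • F x) t :=
  ((hh.derivWithin (by norm_num)).inv hh0).smul hF

theorem hasDerivAt_exp_smul_inv_deriv_smul {t : ℝ} (hF : ContDiffAt ℝ 1 F t)
    (hh : ContDiffAt ℝ 2 h t) (hh0 : deriv h t ≠ 0) :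
    HasDerivAt (fun x : ℝ => Complex.exp (2 * π * Complex.I * h x) • (deriv h x)⁻¹ • F x)
      (Complex.exp (2 * π * Complex.I * h t) • deriv (fun x => (deriv h x)⁻¹ • F x) t +
        (2 * π * Complex.I : ℂ) • Complex.exp (2 * π * Complex.I * h t) • F t) t := by
  convert (hasDerivAt_exp_two_pi_I_mul (hh.differentiableAt two_ne_zero).hasDerivAt).fun_smul
    (contDiffAt_inv_deriv_smul hF hh hh0).differentiableAt_one.hasDerivAt using 2
  have hh0' : ((deriv h t : ℝ) : ℂ) ≠ 0 := mod_cast hh0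
  rw [← Complex.coe_smul (deriv h t)⁻¹, smul_smul, smul_smul]
  congr 1
  push_cast
  field_simp

theorem two_pi_I_smul_integral_exp_smul (hS : IsCompact S) (hF : ∀ t ∈ S, ContDiffAt ℝ 1 F t)
    (hF0 : ∀ t ∉ S, F t = 0) (hh : ∀ t ∈ S, ContDiffAt ℝ 2 h t) (hh0 : ∀ t ∈ S, deriv h t ≠ 0) :
    (2 * π * Complex.I : ℂ) • ∫ t : ℝ, Complex.exp (2 * π * Complex.I * h t) • F t =
      -∫ t : ℝ, Complex.exp (2 * π * Complex.I * h t) •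
        deriv (fun x => (deriv h x)⁻¹ • F x) t := by
  have hquot0 : ∀ t ∉ S, (deriv h t)⁻¹ • F t = 0 := fun t ht => by rw [hF0 t ht, smul_zero]
  have hderiv0 : ∀ t ∉ S, deriv (fun x => (deriv h x)⁻¹ • F x) t = 0 :=
    deriv_eq_zero_of_notMem_of_isClosed hS.isClosed hquot0
  have hquot (t : ℝ) (ht : t ∈ S) := contDiffAt_inv_deriv_smul (hF t ht) (hh t ht) (hh0 t ht)
  have hasDerivAt_primitive (t : ℝ) :
      HasDerivAt (fun x : ℝ => Complex.exp (2 * π * Complex.I * h x) • (deriv h x)⁻¹ • F x)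
        (Complex.exp (2 * π * Complex.I * h t) • deriv (fun x => (deriv h x)⁻¹ • F x) t +
          (2 * π * Complex.I : ℂ) • Complex.exp (2 * π * Complex.I * h t) • F t) t := by
    by_cases ht : t ∈ S
    · exact hasDerivAt_exp_smul_inv_deriv_smul (hF t ht) (hh t ht) (hh0 t ht)
    · rw [hderiv0 t ht, hF0 t ht, smul_zero, smul_zero, add_zero]
      exact (hasDerivAt_const t (0 : E)).congr_of_eventuallyEq
        (eventuallyEq_zero_of_notMem_of_isClosed hS.isClosed
          (fun x hx => by rw [hquot0 x hx, smul_zero]) ht)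
  have hhc (t : ℝ) (ht : t ∈ S) := (hh t ht).continuousAt
  have hint := (integrable_exp_smul hS hhc (fun t ht => (hF t ht).continuousAt) hF0).fun_smul
    (2 * π * Complex.I : ℂ)
  have hint' := integrable_exp_smul hS hhc
    (fun t ht => ((hquot t ht).derivWithin (m := 0) (by simp)).continuousAt) hderiv0
  have hzero := integral_eq_zero_of_hasDerivAt_of_integrable hasDerivAt_primitive
    (hint'.fun_add hint)
    (integrable_exp_smul hS hhc (fun t ht => (hquot t ht).continuousAt) hquot0)
  rw [integral_add hint' hint, integral_smul] at hzero
  exact eq_neg_of_add_eq_zero_right hzero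

theorem norm_integral_exp_smul_le_of_hasDerivBoundAt {N : ℕ} {G X W : ℝ} (hS : IsCompact S)
    (hW : 0 < W) (hF : ∀ t ∈ S, HasDerivBoundAt N X W F t) (hF0 : ∀ t ∉ S, F t = 0)
    (hh : ∀ t ∈ S, ContDiffAt ℝ (N + 1) h t) (hh0 : ∀ t ∈ S, deriv h t ≠ 0)
    (hG : ∀ t ∈ S, HasDerivBoundAt N G W (fun x => (deriv h x)⁻¹) t) :
    ‖∫ t : ℝ, Complex.exp (2 * π * Complex.I * h t) • F t‖ ≤
      2 ^ (N + 1).choose 2 * (G / W) ^ N * X * volume.real S := by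
  induction N generalizing F X with
  | zero => simpa using norm_integral_exp_smul_le hS (fun t ht => (hF t ht).norm_le) hF0
  | succ N ih =>
    have hparts := two_pi_I_smul_integral_exp_smul hS
      (fun t ht => (hF t ht).contDiffAt.of_le (by simp)) hF0
      (fun t ht => (hh t ht).of_le (by push_cast; rw [add_assoc, one_add_one_eq_two]; simp)) hh0
    have norm_two_pi_I : ‖(2 * π * Complex.I : ℂ)‖ = 2 * π := by simp [pi_pos.le]
    calc ‖∫ t : ℝ, Complex.exp (2 * π * Complex.I * h t) • F t‖
        ≤ 2 * π * ‖∫ t : ℝ, Complex.exp (2 * π * Complex.I * h t) • F t‖ :=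
          le_mul_of_one_le_left (norm_nonneg _) (by linarith [pi_gt_three])
      _ = ‖∫ t : ℝ, Complex.exp (2 * π * Complex.I * h t) •
            deriv (fun x => (deriv h x)⁻¹ • F x) t‖ := by
          rw [← norm_two_pi_I, ← norm_smul, hparts, norm_neg]
      _ ≤ 2 ^ (N + 1).choose 2 * (G / W) ^ N * (2 ^ (N + 1) * (G * X) / W) * volume.real S :=
          ih (fun t ht => ((hG t ht).smul (hF t ht) hW).deriv)
            (deriv_eq_zero_of_notMem_of_isClosed hS.isClosed
              fun t ht => by rw [hF0 t ht, smul_zero])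
            (fun t ht => (hh t ht).of_le (by simp))
            (fun t ht => (hG t ht).of_le N.le_succ)
      _ = 2 ^ (N + 1 + 1).choose 2 * (G / W) ^ (N + 1) * X * volume.real S := by
          rw [Nat.choose_succ_succ' (N + 1) 1, Nat.choose_one_right, pow_add]
          ring

theorem inv_pow_ceil_le_rpow_neg {T : ℝ} (hT : 1 ≤ T) (A : ℝ) : (T ^ ⌈A⌉₊)⁻¹ ≤ T ^ (-A) := by
  rw [← rpow_natCast, ← rpow_neg (zero_le_one.trans hT)]
  exact rpow_le_rpow_of_exponent_le hT (neg_le_neg (Nat.le_ceil A))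

theorem hasDerivBoundAt_inv_deriv {n : ℕ} {D R W t : ℝ} (hD : 0 ≤ D) (hR : 0 < R) (hW : 0 < W)
    (hRW : 1 ≤ R * W) (hh : ContDiffAt ℝ (n + 1) h t) (hRh : R ≤ |deriv h t|)
    (hDh : ∀ j, 2 ≤ j → j ≤ n + 1 → |iteratedDeriv j h t| ≤ D / W ^ j) :
    HasDerivBoundAt n (invDerivConst D n / R) W (fun x => (deriv h x)⁻¹) t := by
  refine .inv hD hR hW (hh.derivWithin le_rfl) hRh fun j hj hjn => ?_
  rw [← iteratedDeriv_succ']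
  calc ‖iteratedDeriv (j + 1) h t‖ ≤ D / W ^ (j + 1) := hDh (j + 1) (by lia) (by lia)
    _ ≤ D * (R * W) / W ^ (j + 1) := by
        gcongr
        exact le_mul_of_one_le_right hD hRW
    _ = D * R / W ^ j := by
        rw [← mul_assoc, pow_succ, mul_div_mul_right _ _ hW.ne']

theorem norm_integral_exp_smul_le_rpow_neg {A D X R W : ℝ} (hA : 0 ≤ A) (hD : 0 ≤ D) (hX : 0 ≤ X)
    (hR : 0 < R) (hW : 0 < W) (hS : IsCompact S)
    (hF : ∀ t ∈ S, HasDerivBoundAt ⌈A⌉₊ X W F t) (hF0 : ∀ t ∉ S, F t = 0)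
    (hh : ∀ t ∈ S, ContDiffAt ℝ (⌈A⌉₊ + 1) h t) (hRh : ∀ t ∈ S, R ≤ |deriv h t|)
    (hDh : ∀ j, 2 ≤ j → j ≤ ⌈A⌉₊ + 1 → ∀ t ∈ S, |iteratedDeriv j h t| ≤ D / W ^ j) :
    ‖∫ t : ℝ, Complex.exp (2 * π * Complex.I * h t) • F t‖ ≤
      2 ^ (⌈A⌉₊ + 1).choose 2 * invDerivConst D ⌈A⌉₊ ^ ⌈A⌉₊ * X * volume.real S *
        (R * W) ^ (-A) := by
  have hconst := one_le_invDerivConst hD ⌈A⌉₊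
  rcases le_total (R * W) 1 with hRW | hRW
  · calc _ ≤ X * volume.real S :=
          norm_integral_exp_smul_le hS (fun t ht => (hF t ht).norm_le) hF0
      _ = 1 * 1 * X * volume.real S * 1 := by ring
      _ ≤ _ := by
          gcongr
          · exact one_le_pow₀ one_le_two
          · exact one_le_pow₀ hconst
          · exact one_le_rpow_of_pos_of_le_one_of_nonpos (by positivity) hRW (by linarith)
  · calc _ ≤ 2 ^ (⌈A⌉₊ + 1).choose 2 * (invDerivConst D ⌈A⌉₊ / R / W) ^ ⌈A⌉₊ * X *
          volume.real S :=
          norm_integral_exp_smul_le_of_hasDerivBoundAt hS hW hF hF0 hh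
            (fun t ht => abs_pos.1 (hR.trans_le (hRh t ht)))
            fun t ht => hasDerivBoundAt_inv_deriv hD hR hW hRW (hh t ht) (hRh t ht)
              fun j hj hjA => hDh j hj hjA t ht
      _ = 2 ^ (⌈A⌉₊ + 1).choose 2 * invDerivConst D ⌈A⌉₊ ^ ⌈A⌉₊ * X * volume.real S *
          ((R * W) ^ ⌈A⌉₊)⁻¹ := by
          rw [div_div, div_pow]
          ring
      _ ≤ _ := by
          gcongr
          exact inv_pow_ceil_le_rpow_neg hRW A

end OscillatoryIntegral

theorem rpow_neg_mul_min_le {R U V : ℝ} (hR : 0 ≤ R) (hU : 0 ≤ U) (hV : 0 ≤ V) (A : ℝ) :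
    (R * min U V) ^ (-A) ≤ (R * V) ^ (-A) + (R * U) ^ (-A) := by
  rcases min_choice U V with hmin | hmin <;> rw [hmin]
  · exact le_add_of_nonneg_left (by positivity)
  · exact le_add_of_nonneg_right (by positivity)

theorem div_pow_le_inv_pow_of_le_div_sqrt {Y Q W : ℝ} {j : ℕ} (hY : 1 ≤ Y) (hW : 0 < W)
    (hWQ : W ≤ Q / √Y) (hj : 2 ≤ j) : Y / Q ^ j ≤ (W ^ j)⁻¹ := by
  have hsqrt : 1 ≤ √Y := one_le_sqrt.2 hY
  have hWQ' : W * √Y ≤ Q := (le_div_iff₀ (by positivity)).1 hWQ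
  have hQ : 0 < Q := lt_of_lt_of_le (by positivity) hWQ'
  rw [← one_div, div_le_div_iff₀ (by positivity) (by positivity), one_mul]
  calc Y * W ^ j = √Y ^ 2 * W ^ j := by rw [sq_sqrt (by positivity)]
    _ ≤ √Y ^ j * W ^ j := by gcongr
    _ = (W * √Y) ^ j := by rw [mul_pow, mul_comm]
    _ ≤ Q ^ j := by gcongr

theorem le_sum_range_abs (C : ℕ → ℝ) {j n : ℕ} (hj : j < n) : C j ≤ ∑ i ∈ Finset.range n, |C i| :=
  (le_abs_self (C j)).trans
    (Finset.single_le_sum (f := fun i => |C i|) (fun _ _ => abs_nonneg _) (Finset.mem_range.2 hj))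

theorem nonstationary_phase_general {E : Type*} [NormedAddCommGroup E] [NormedSpace ℂ E]
    [CompleteSpace E] (C C' : ℕ → ℝ) (A : ℝ) (hA : 0 ≤ A) :
    ∃ c : ℝ, ∀ (S : Set ℝ) (F : ℝ → E) (h : ℝ → ℝ) (X U Y Q R : ℝ),
      IsCompact S → 0 ≤ X → 0 < U → 1 ≤ Y → 0 < Q → 0 < R →
      (∀ t ∈ S, ContDiffAt ℝ ⌈A⌉₊ F t) → (∀ t ∈ S, ContDiffAt ℝ (⌈A⌉₊ + 1) h t) →
      (∀ t ∉ S, F t = 0) →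
      (∀ t ∈ S, R ≤ |deriv h t|) →
      (∀ j, 2 ≤ j → j ≤ ⌈A⌉₊ + 1 → ∀ t ∈ S, |iteratedDeriv j h t| ≤ C j * Y / Q ^ j) →
      (∀ j ≤ ⌈A⌉₊, ∀ t ∈ S, ‖iteratedDeriv j F t‖ ≤ C' j * X / U ^ j) →
      ‖∫ t : ℝ, Complex.exp (2 * π * Complex.I * h t) • F t‖ ≤
        c * volume.real S * X * ((Q * R / √Y) ^ (-A) + (R * U) ^ (-A)) := by
  set D := ∑ i ∈ Finset.range (⌈A⌉₊ + 2), |C i|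
  set K := ∑ i ∈ Finset.range (⌈A⌉₊ + 1), |C' i|
  have hD : 0 ≤ D := by positivity
  have hK : 0 ≤ K := by positivity
  have hconst := one_le_invDerivConst hD ⌈A⌉₊
  refine ⟨2 ^ (⌈A⌉₊ + 1).choose 2 * invDerivConst D ⌈A⌉₊ ^ ⌈A⌉₊ * K,
    fun S F h X U Y Q R hS hX hU hY hQ hR hF hh hF0 hRh hCh hCF => ?_⟩
  set W := min U (Q / √Y)
  have hW : 0 < W := lt_min hU (by positivity)
  have hFW : ∀ t ∈ S, HasDerivBoundAt ⌈A⌉₊ (K * X) W F t := fun t ht => by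
    refine ⟨hF t ht, fun j hj => (hCF j hj t ht).trans ?_⟩
    gcongr
    · exact le_sum_range_abs C' (by lia)
    · exact min_le_left _ _
  have hhW : ∀ j, 2 ≤ j → j ≤ ⌈A⌉₊ + 1 → ∀ t ∈ S, |iteratedDeriv j h t| ≤ D / W ^ j := by
    intro j hj hjA t ht
    calc |iteratedDeriv j h t| ≤ C j * (Y / Q ^ j) := by
          rw [← mul_div_assoc]
          exact hCh j hj hjA t ht
      _ ≤ D * (W ^ j)⁻¹ := by
          gcongr
          · exact le_sum_range_abs C (by lia)
          · exact div_pow_le_inv_pow_of_le_div_sqrt hY hW (min_le_right _ _) hj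
      _ = D / W ^ j := (div_eq_mul_inv _ _).symm
  calc _ ≤ 2 ^ (⌈A⌉₊ + 1).choose 2 * invDerivConst D ⌈A⌉₊ ^ ⌈A⌉₊ * (K * X) * volume.real S *
        (R * W) ^ (-A) :=
        norm_integral_exp_smul_le_rpow_neg hA hD (mul_nonneg hK hX) hR hW hS hFW hF0 hh hRh hhW
    _ = 2 ^ (⌈A⌉₊ + 1).choose 2 * invDerivConst D ⌈A⌉₊ ^ ⌈A⌉₊ * K * volume.real S * X *
        (R * W) ^ (-A) := by ring
    _ ≤ _ := by
        gcongr
        rw [show Q * R / √Y = R * (Q / √Y) by ring]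
        exact rpow_neg_mul_min_le hR.le hU.le (by positivity) A

/-- Non-stationary phase estimate: if `F` is smooth, supported in `[a,b]`, with
`|F^{(j)}| ≤ C'_j·X·U^{−j}`, and the phase `h` satisfies `|h'| ≥ R` and
`|h^{(j)}| ≤ C_j·Y·Q^{−j}` for `j ≥ 2` on `[a,b]`, then for every `A ≥ 0`,
`|∫ F(t)e(h(t))dt| ≤ C(A)·(b−a)·X·((QR/√Y)^{−A} + (RU)^{−A})`. -/
theorem nonstationary_phase (C C' : ℕ → ℝ) (A : ℝ) (hA : 0 ≤ A) :
    ∃ c : ℝ, ∀ (a b : ℝ) (F : ℝ → ℂ) (h : ℝ → ℝ) (X U Y Q R : ℝ),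
      a ≤ b → 0 < X → 0 < U → 1 ≤ Y → 0 < Q → 0 < R →
      ContDiff ℝ (⊤ : ℕ∞) F → ContDiff ℝ (⊤ : ℕ∞) h →
      (∀ t, t ∉ Set.Icc a b → F t = 0) →
      (∀ t ∈ Set.Icc a b, R ≤ |deriv h t|) →
      (∀ j, 2 ≤ j → ∀ t ∈ Set.Icc a b, |iteratedDeriv j h t| ≤ C j * Y / Q ^ j) →
      (∀ (j : ℕ) (t : ℝ), ‖iteratedDeriv j F t‖ ≤ C' j * X / U ^ j) →
      ‖∫ t : ℝ, F t * Complex.exp (2 * π * Complex.I * (h t))‖ ≤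
        c * (b - a) * X * ((Q * R / Real.sqrt Y) ^ (-A) + (R * U) ^ (-A)) := by
  obtain ⟨c, hc⟩ := nonstationary_phase_general (E := ℂ) C C' A hA
  refine ⟨c, fun a b F h X U Y Q R hab hX hU hY hQ hR hF hh hF0 hRh hCh hCF => ?_⟩
  simpa only [smul_eq_mul, mul_comm (F _), volume_real_Icc_of_le hab] using
    hc (Set.Icc a b) F h X U Y Q R isCompact_Icc hX.le hU hY hQ hR
      (fun t _ => (contDiff_infty.1 hF _).contDiffAt)
      (fun t _ => (contDiff_infty.1 hh (⌈A⌉₊ + 1)).contDiffAt) hF0 hRh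
      (fun j hj _ => hCh j hj) (fun j _ t _ => hCF j t)
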